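/- arXiv:1706.01313 — 2 statements merged into one kernel-verified Lean document; each statement's English description precedes it below -/
import Mathlib

section
/- Every finitely generated group with maximal global cogrowth is amenable: if G is a group with a finite choice of generators X via π : X⁺ → G (not necessarily symmetric) and γ^{G,X} = |X|, then G is amenable. -/
/-!
Write `d = |X|`, and let `L g` be left translation by `g` on `ℓ²(G)`, `S_n = ∑ L (w̄)` over words `w`
of length `n`, and `q_n = S_n δ₁`, so that `q_n(g)` counts the words of length `n` with value `g`.
Then `γ(n)` is a sum of inner products `⟨q_i, q_j⟩` with `i + j = n`.

If for some `N ≥ 1` and `c < 1` one had `‖q_{n+N}‖ ≤ c dᴺ ‖q_n‖` for all `n`, the norms `‖q_n‖` would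
be `O((r d)ⁿ)` with `r = c^{1/N} < 1`, and Cauchy–Schwarz would give cogrowth rate less than `d`
(`gammaRate_lt`). So under maximal cogrowth, for every `N` and every `c < 1` there is a unit vector
`v` with `‖S_N v‖ ≥ c dᴺ` (`exists_growth`). A sum of `dᴺ` unit vectors of almost maximal norm has
almost equal summands, so `L a v` and `L b v` are close whenever `a` and `b` are values of words of
equal length at most `N` (`exists_almost_equal`).

Passing from one length to the next is handled by averaging. Fix a letter `x₀`, let `μ` be the
average over `m < N` of the probability measures with density `(L (x₀ᵐ) v)²`. Translating by a
letter `x` turns the `m`-th term into the one for the word `x x₀ᵐ`, which is close to the one for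
`x₀^{m+1}`, so up to a small error the sum telescopes and `μ` is almost invariant under every letter
(`exists_approx_mean`). An ultralimit of such `μ` is invariant under the letters, hence under `G`,
because the letters generate `G` as a semigroup (`isAmenableGroup_of_approx`). Symmetry of `X` plays
no role.
-/


open Filter

/-- The global cogrowth function. -/
noncomputable def gammaFn {X : Type} {S : Type*} [Mul S]
    (π : FreeSemigroup X →ₙ* S) (n : ℕ) : ℕ :=
  Nat.card {p : FreeSemigroup X × FreeSemigroup X //
    p.1.length + p.2.length = n ∧ π p.1 = π p.2}

/-- The global cogrowth rate. -/
noncomputable def gammaRate {X : Type} {S : Type*} [Mul S]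
    (π : FreeSemigroup X →ₙ* S) : ℝ :=
  Filter.atTop.limsup (fun n : ℕ => (gammaFn π n : ℝ) ^ (1 / (n : ℝ)))

/-- `G` is an amenable group: there is a left-invariant finitely additive probability
measure on the subsets of `G`. -/
def IsAmenableGroup (G : Type*) [Group G] : Prop :=
  ∃ μ : Set G → ℝ,
    (∀ A : Set G, 0 ≤ μ A ∧ μ A ≤ 1) ∧
    μ Set.univ = 1 ∧
    (∀ A B : Set G, Disjoint A B → μ (A ∪ B) = μ A + μ B) ∧
    (∀ (g : G) (T : Set G), μ ((fun t => g * t) '' T) = μ T)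

open Topology

/-! ### Translations and squared densities in `ℓ²(G)` -/

section Translation

variable {G : Type*}

/-- Left translation on `ℓ²(G)`, `(L g v)(h) = v (g⁻¹ h)`, as a linear isometry. -/
noncomputable def leftTrans [Group G] (g : G) :
    lp (fun _ : G => ℝ) 2 →ₗᵢ[ℝ] lp (fun _ : G => ℝ) 2 where
  toFun v := ⟨fun h => v (g⁻¹ * h), by
    have h2 : (0 : ℝ) < (2 : ENNReal).toReal := by norm_num
    have hv := (memℓp_gen_iff h2).1 (lp.memℓp v)
    exact (memℓp_gen_iff h2).2 ((Equiv.mulLeft g⁻¹).summable_iff.2 hv)⟩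
  map_add' v w := by ext h; rfl
  map_smul' c v := by ext h; rfl
  norm_map' v := by
    have h2 : (0 : ℝ) < (2 : ENNReal).toReal := by norm_num
    rw [lp.norm_eq_tsum_rpow h2, lp.norm_eq_tsum_rpow h2]
    congr 1
    exact (Equiv.mulLeft g⁻¹).tsum_eq (fun h => ‖v h‖ ^ (2 : ENNReal).toReal)

lemma leftTrans_apply [Group G] (g h : G) (v : lp (fun _ : G => ℝ) 2) :
    leftTrans g v h = v (g⁻¹ * h) := rfl

lemma leftTrans_mul [Group G] (g h : G) (v : lp (fun _ : G => ℝ) 2) :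
    leftTrans (g * h) v = leftTrans g (leftTrans h v) := by
  ext k
  simp [leftTrans_apply, mul_assoc]

lemma leftTrans_one [Group G] (v : lp (fun _ : G => ℝ) 2) : leftTrans 1 v = v := by
  ext k
  simp [leftTrans_apply]

open Classical in
/-- The point mass at the identity, as a vector of `ℓ²(G)`. -/
noncomputable def deltaOne (G : Type*) [Group G] : lp (fun _ : G => ℝ) 2 :=
  lp.single 2 (1 : G) (1 : ℝ)

open Classical in
lemma inner_leftTrans_deltaOne [Group G] (g h : G) :
    inner ℝ (leftTrans g (deltaOne G)) (leftTrans h (deltaOne G)) = if g = h then (1 : ℝ) else 0 := by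
  have key : ∀ g : G, leftTrans g (deltaOne G) = lp.single 2 g (1 : ℝ) := by
    intro g
    ext k
    by_cases hk : k = g
    · subst hk
      simp [leftTrans_apply, deltaOne]
    · have : ¬ g⁻¹ * k = 1 := fun h => hk (inv_mul_eq_one.1 h).symm
      simp [leftTrans_apply, deltaOne, hk, this]
  rw [key, key, lp.inner_single_left]
  by_cases hgh : g = h
  · subst hgh; simp
  · simp [hgh]

/-- The mass that the measure with density `v²` gives to `T`. -/
noncomputable def sqMass (v : lp (fun _ : G => ℝ) 2) (T : Set G) : ℝ :=
  ∑' g, T.indicator (fun g => (v g) ^ 2) g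

lemma summable_sq (v : lp (fun _ : G => ℝ) 2) : Summable fun g => (v g) ^ 2 := by
  have h2 : (0 : ℝ) < (2 : ENNReal).toReal := by norm_num
  simpa using (memℓp_gen_iff h2).1 (lp.memℓp v)

lemma sqMass_univ (v : lp (fun _ : G => ℝ) 2) : sqMass v Set.univ = ‖v‖ ^ 2 := by
  have h2 : (0 : ℝ) < (2 : ENNReal).toReal := by norm_num
  have := lp.norm_rpow_eq_tsum h2 v
  simp at this
  simp [sqMass, this]

lemma sqMass_nonneg (v : lp (fun _ : G => ℝ) 2) (T : Set G) : 0 ≤ sqMass v T :=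
  tsum_nonneg fun g => Set.indicator_nonneg (fun _ _ => sq_nonneg _) g

lemma sqMass_union (v : lp (fun _ : G => ℝ) 2) {A B : Set G} (h : Disjoint A B) :
    sqMass v (A ∪ B) = sqMass v A + sqMass v B := by
  unfold sqMass
  rw [← ((summable_sq v).indicator A).tsum_add ((summable_sq v).indicator B),
    Set.indicator_union_of_disjoint h]

lemma sqMass_le (v : lp (fun _ : G => ℝ) 2) (T : Set G) : sqMass v T ≤ ‖v‖ ^ 2 := by
  rw [← sqMass_univ, ← Set.union_compl_self T, sqMass_union v disjoint_compl_right]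
  linarith [sqMass_nonneg v Tᶜ]

lemma sqMass_leftTrans [Group G] (g : G) (v : lp (fun _ : G => ℝ) 2) (T : Set G) :
    sqMass (leftTrans g v) ((fun t => g * t) '' T) = sqMass v T := by
  unfold sqMass
  rw [← (Equiv.mulLeft g).tsum_eq]
  congr 1
  ext t
  by_cases ht : t ∈ T
  · simp [ht, leftTrans_apply]
  · simp [ht]

/-- Cauchy–Schwarz, applied to `v² - w² = (v - w)(v + w)`: the densities of unit vectors that are
close in `ℓ²` are close in `ℓ¹`. -/
lemma sqMass_sub_le (v w : lp (fun _ : G => ℝ) 2) (hv : ‖v‖ = 1) (hw : ‖w‖ = 1) (T : Set G) :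
    sqMass v T ≤ sqMass w T + 2 * ‖v - w‖ := by
  have hmem : ∀ u : lp (fun _ : G => ℝ) 2, Memℓp (T.indicator u) 2 := by
    intro u
    have h2 : (0 : ℝ) < (2 : ENNReal).toReal := by norm_num
    refine (memℓp_gen_iff h2).2 ?_
    refine (((summable_sq u).indicator T)).congr fun g => ?_
    by_cases hg : g ∈ T <;> simp [hg]
  let r : lp (fun _ : G => ℝ) 2 → lp (fun _ : G => ℝ) 2 := fun u => ⟨T.indicator u, hmem u⟩
  have hr : ∀ u, sqMass u T = ‖r u‖ ^ 2 := by
    intro u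
    rw [← sqMass_univ]
    unfold sqMass
    congr 1
    ext g
    change _ = Set.univ.indicator (fun g => (T.indicator u g) ^ 2) g
    by_cases hg : g ∈ T <;> simp [hg]
  have hsub : r v - r w = r (v - w) := by
    ext g
    change T.indicator v g - T.indicator w g = T.indicator (⇑(v - w)) g
    by_cases hg : g ∈ T
    · simp only [Set.indicator_of_mem hg]; rfl
    · simp only [Set.indicator_of_notMem hg, sub_zero]
  have hle : ∀ u, ‖r u‖ ≤ ‖u‖ := by
    intro u
    have := sqMass_le u T
    rw [hr] at this
    exact le_of_sq_le_sq this (norm_nonneg _) 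
  rw [hr, hr]
  have h1 := norm_sub_norm_le (r v) (r w)
  rw [hsub] at h1
  have h3 := hle (v - w)
  have h4 := hle v
  have h5 := hle w
  rw [hv] at h4
  rw [hw] at h5
  nlinarith [norm_nonneg (r v), norm_nonneg (r w), norm_nonneg (v - w)]

end Translation

/-! ### Limits of almost invariant means -/

section Limit

/-- Weak-* compactness of the set of means: an approximately invariant sequence of finitely
additive probability measures has an invariant ultralimit. -/
lemma isAmenableGroup_of_approx {X : Type} {G : Type*} [Group G]
    (π : FreeSemigroup X →ₙ* G) (hπ : Function.Surjective π)
    (H : ∀ k : ℕ, ∃ μ : Set G → ℝ, (∀ A : Set G, 0 ≤ μ A ∧ μ A ≤ 1) ∧ μ Set.univ = 1 ∧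
      (∀ A B : Set G, Disjoint A B → μ (A ∪ B) = μ A + μ B) ∧
      ∀ (x : X) (T : Set G),
        |μ ((fun t => π (FreeSemigroup.of x) * t) '' T) - μ T| ≤ 1 / ((k : ℝ) + 1)) :
    IsAmenableGroup G := by
  choose μ h01 hu hadd hinv using H
  let U : Ultrafilter ℕ := hyperfilter ℕ
  have hU : (U : Filter ℕ) ≤ atTop := Nat.hyperfilter_le_atTop
  have hlim : ∀ T : Set G, ∃ a : ℝ, Tendsto (fun k => μ k T) U (𝓝 a) := by
    intro T
    have hc := isCompact_Icc (a := (0 : ℝ)) (b := 1)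
    rw [isCompact_iff_ultrafilter_le_nhds] at hc
    obtain ⟨a, -, ha⟩ := hc (U.map fun k => μ k T)
      (by
        rw [le_principal_iff, Ultrafilter.coe_map, mem_map]
        exact univ_mem' fun k => h01 k T)
    exact ⟨a, ha⟩
  choose m hm using hlim
  have hgen : ∀ (x : X) (T : Set G), m ((fun t => π (FreeSemigroup.of x) * t) '' T) = m T := by
    intro x T
    have h1 := ((hm ((fun t => π (FreeSemigroup.of x) * t) '' T)).sub (hm T)).abs
    have h2 := tendsto_one_div_add_atTop_nhds_zero_nat (𝕜 := ℝ) |>.mono_left hU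
    have h3 := le_of_tendsto_of_tendsto' h1 h2 fun k => hinv k x T
    exact sub_eq_zero.1 (abs_nonpos_iff.1 h3)
  have h0 : ∀ A, 0 ≤ m A := fun A => ge_of_tendsto' (hm A) fun k => (h01 k A).1
  have h1 : ∀ A, m A ≤ 1 := fun A => le_of_tendsto' (hm A) fun k => (h01 k A).2
  refine ⟨m, fun A => ⟨h0 A, h1 A⟩, ?_, ?_, ?_⟩
  · refine tendsto_nhds_unique (hm _) ?_
    simp only [hu]
    exact tendsto_const_nhds
  · intro A B hAB
    refine tendsto_nhds_unique (hm _) ?_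
    simp only [hadd _ _ _ hAB]
    exact (hm A).add (hm B)
  · intro g
    obtain ⟨w, rfl⟩ := hπ g
    induction w using FreeSemigroup.recOnMul with
    | ih1 x => exact hgen x
    | ih2 x y hx hy =>
      intro T
      rw [map_mul, ← hy T, ← hx ((fun t => π y * t) '' T), Set.image_image]
      simp only [mul_assoc]

end Limit

/-! ### Walk distributions and cogrowth -/

section Walk

variable {X : Type} {G : Type*} [Group G]

/-- The value in `G` of a word of length `n` in letters evaluated by `s`. -/
def wordProd (s : X → G) {n : ℕ} (u : Fin n → X) : G := (List.ofFn fun i => s (u i)).prod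

lemma map_eq_prod (π : FreeSemigroup X →ₙ* G) (w : FreeSemigroup X) :
    π w = ((w.head :: w.tail).map fun x => π (FreeSemigroup.of x)).prod := by
  induction w using FreeSemigroup.recOnMul with
  | ih1 x => simp
  | ih2 x y hx hy =>
    rw [map_mul, hy]
    simp

lemma exists_wordProd (π : FreeSemigroup X →ₙ* G) (w : FreeSemigroup X) {n : ℕ}
    (hn : w.length = n) : ∃ u : Fin n → X, List.ofFn u = w.head :: w.tail ∧
      wordProd (fun x => π (FreeSemigroup.of x)) u = π w := by
  subst hn
  have h : List.ofFn (w.head :: w.tail).get = w.head :: w.tail := List.ofFn_get _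
  refine ⟨(w.head :: w.tail).get, h, ?_⟩
  have h2 : (List.ofFn (w.head :: w.tail).get).map (fun x => π (FreeSemigroup.of x)) =
      List.ofFn ((fun x => π (FreeSemigroup.of x)) ∘ (w.head :: w.tail).get) := List.map_ofFn
  rw [h] at h2
  rw [map_eq_prod, h2]
  rfl

variable [Fintype X]

/-- The unnormalized `n`-step walk operator: the sum of the translates of `v` by all words of
length `n`. -/
noncomputable def walkSum (s : X → G) (n : ℕ) (v : lp (fun _ : G => ℝ) 2) :
    lp (fun _ : G => ℝ) 2 :=
  ∑ u : Fin n → X, leftTrans (wordProd s u) v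

lemma walkSum_zero (s : X → G) (v : lp (fun _ : G => ℝ) 2) : walkSum s 0 v = v := by
  simp [walkSum, wordProd, leftTrans_one]

lemma walkSum_succ (s : X → G) (n : ℕ) (v : lp (fun _ : G => ℝ) 2) :
    walkSum s (n + 1) v = ∑ x, leftTrans (s x) (walkSum s n v) := by
  unfold walkSum
  rw [← (Fin.consEquiv fun _ => X).sum_comp, Fintype.sum_prod_type]
  refine Finset.sum_congr rfl fun x _ => ?_
  rw [map_sum]
  refine Finset.sum_congr rfl fun u _ => ?_
  rw [← leftTrans_mul]
  simp [wordProd, Fin.consEquiv]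

lemma walkSum_add (s : X → G) (m n : ℕ) (v : lp (fun _ : G => ℝ) 2) :
    walkSum s (n + m) v = walkSum s m (walkSum s n v) := by
  induction m with
  | zero => rw [walkSum_zero, add_zero]
  | succ m ih => rw [← add_assoc, walkSum_succ, ih, walkSum_succ]

open Classical in
/-- The inner product of two walk distributions counts pairs of words with equal value. -/
lemma card_le_norm_walkSum (s : X → G) (i j : ℕ) :
    (Nat.card {p : (Fin i → X) × (Fin j → X) // wordProd s p.1 = wordProd s p.2} : ℝ) ≤
      ‖walkSum s i (deltaOne G)‖ * ‖walkSum s j (deltaOne G)‖ := by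
  refine le_trans (le_of_eq ?_) (real_inner_le_norm _ _)
  unfold walkSum
  simp only [sum_inner, inner_sum, inner_leftTrans_deltaOne]
  rw [Finset.sum_comm, Nat.card_eq_fintype_card, Fintype.card_subtype, ← Fintype.sum_prod_type'
    (f := fun (a : Fin i → X) (b : Fin j → X) =>
      if wordProd s a = wordProd s b then (1 : ℝ) else 0), Finset.sum_boole]

/-- Splitting the pairs counted by `γ(n)` by the length `i` of the first word. The right-hand side
also has terms for the empty words `i = 0` and `i = n`, which only weakens the bound. -/
lemma gammaFn_le (π : FreeSemigroup X →ₙ* G) (n : ℕ) :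
    (gammaFn π n : ℝ) ≤ ∑ i : Fin (n + 1),
      ‖walkSum (fun x => π (FreeSemigroup.of x)) i (deltaOne G)‖ *
      ‖walkSum (fun x => π (FreeSemigroup.of x)) (n - i) (deltaOne G)‖ := by
  set s : X → G := fun x => π (FreeSemigroup.of x) with hs
  let T := Σ i : Fin (n + 1),
    {p : (Fin i → X) × (Fin (n - i) → X) // wordProd s p.1 = wordProd s p.2}
  let F : T → List X × List X := fun t => (List.ofFn t.2.1.1, List.ofFn t.2.1.2)
  have hex : ∀ p : {p : FreeSemigroup X × FreeSemigroup X //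
      p.1.length + p.2.length = n ∧ π p.1 = π p.2},
      ∃ t : T, F t = (p.1.1.head :: p.1.1.tail, p.1.2.head :: p.1.2.tail) := by
    rintro ⟨⟨a, b⟩, hl, he⟩
    simp only at hl he
    obtain ⟨u, hu, hu'⟩ := exists_wordProd π a rfl
    obtain ⟨v, hv, hv'⟩ := exists_wordProd π b (n := n - a.length) (by omega)
    refine ⟨⟨⟨a.length, by omega⟩, ⟨(u, v), ?_⟩⟩, ?_⟩
    · rw [hu', hv', he]
    · simp only [F, hu, hv]
  choose g hg using hex
  have hinj : Function.Injective g := by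
    rintro ⟨⟨a, b⟩, h⟩ ⟨⟨a', b'⟩, h'⟩ hgg
    have := hg ⟨⟨a, b⟩, h⟩
    rw [hgg, hg] at this
    simp only [Prod.mk.injEq, List.cons.injEq] at this
    obtain ⟨⟨h1, h2⟩, h3, h4⟩ := this
    have ha : a = a' := FreeSemigroup.ext h1.symm h2.symm
    have hb : b = b' := FreeSemigroup.ext h3.symm h4.symm
    subst ha hb
    rfl
  have hcard : gammaFn π n ≤ Nat.card T := Nat.card_le_card_of_injective g hinj
  have hT : (Nat.card T : ℝ) = ∑ i : Fin (n + 1), (Nat.card {p : (Fin i → X) × (Fin (n - i) → X) //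
      wordProd s p.1 = wordProd s p.2} : ℝ) := by
    rw [Nat.card_sigma, Nat.cast_sum]
  calc (gammaFn π n : ℝ) ≤ Nat.card T := by exact_mod_cast hcard
    _ ≤ _ := by
      rw [hT]
      exact Finset.sum_le_sum fun i _ => card_le_norm_walkSum s i (n - i)

/-- If the `ℓ²` norms of the walk distributions decay exponentially relative to `|X|ⁿ`, then so
does the global cogrowth. -/
lemma gammaRate_lt [Nonempty X] (π : FreeSemigroup X →ₙ* G) {C r : ℝ} (hr : 0 < r) (hr1 : r < 1)
    (h : ∀ n, ‖walkSum (fun x => π (FreeSemigroup.of x)) n (deltaOne G)‖ ≤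
      C * (r * Fintype.card X) ^ n) :
    gammaRate π < Fintype.card X := by
  have hd : (0 : ℝ) < Fintype.card X := by exact_mod_cast Fintype.card_pos
  set d : ℝ := (Fintype.card X : ℝ) with hdd
  obtain ⟨r', hrr', hr'1⟩ := exists_between hr1
  have hr' : 0 < r' := hr.trans hrr'
  have hγ : ∀ n : ℕ, (gammaFn π n : ℝ) ≤ (n + 1) * (C ^ 2 * (r * d) ^ n) := by
    intro n
    refine (gammaFn_le π n).trans ?_
    have : ∀ i ∈ (Finset.univ : Finset (Fin (n + 1))),
        ‖walkSum (fun x => π (FreeSemigroup.of x)) i (deltaOne G)‖ *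
        ‖walkSum (fun x => π (FreeSemigroup.of x)) (n - i) (deltaOne G)‖ ≤
        C ^ 2 * (r * d) ^ n := by
      intro i _
      have hi : (i : ℕ) + (n - i) = n := by omega
      calc _ ≤ (C * (r * d) ^ (i : ℕ)) * (C * (r * d) ^ (n - i)) :=
            mul_le_mul (h _) (h _) (norm_nonneg _) ((norm_nonneg _).trans (h _))
        _ = C ^ 2 * (r * d) ^ ((i : ℕ) + (n - i)) := by rw [pow_add]; ring
        _ = _ := by rw [hi]
    refine (Finset.sum_le_sum this).trans (le_of_eq ?_)
    simp
  have hq0 : 0 ≤ r / r' := by positivity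
  have hq1 : r / r' < 1 := (div_lt_one hr').2 hrr'
  have ht : Tendsto (fun n : ℕ => ((n : ℝ) * (r / r') ^ n + (r / r') ^ n) * C ^ 2) atTop
      (𝓝 ((0 + 0) * C ^ 2)) :=
    ((tendsto_self_mul_const_pow_of_lt_one hq0 hq1).add
      (tendsto_pow_atTop_nhds_zero_of_lt_one hq0 hq1)).mul_const _
  have hev : ∀ᶠ n : ℕ in atTop, (gammaFn π n : ℝ) ^ (1 / (n : ℝ)) ≤ r' * d := by
    filter_upwards [ht.eventually_le_const (u := 1) (by norm_num), eventually_gt_atTop 0]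
      with n hn hn0
    have hle : (gammaFn π n : ℝ) ≤ (r' * d) ^ n := by
      refine (hγ n).trans ?_
      have e : r = (r / r') * r' := by field_simp
      calc ((n : ℝ) + 1) * (C ^ 2 * (r * d) ^ n)
          = (((n : ℝ) * (r / r') ^ n + (r / r') ^ n) * C ^ 2) * (r' * d) ^ n := by
            conv_lhs => rw [e]
            simp only [mul_pow]
            ring
        _ ≤ 1 * (r' * d) ^ n := by gcongr
        _ = _ := one_mul _
    calc (gammaFn π n : ℝ) ^ (1 / (n : ℝ)) ≤ ((r' * d) ^ n) ^ (1 / (n : ℝ)) := by gcongr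
      _ = r' * d := by
        rw [one_div]
        exact Real.pow_rpow_inv_natCast (by positivity) hn0.ne'
  have hlim : gammaRate π ≤ r' * d :=
    limsup_le_of_le (isCoboundedUnder_le_of_le atTop (x := 0) fun n => by positivity) hev
  nlinarith

/-- Maximal cogrowth forces the `N`-step walk operator to have norm `|X|ᴺ`, and this is witnessed
along the walk distributions themselves. -/
lemma exists_growth [Nonempty X] (π : FreeSemigroup X →ₙ* G)
    (hmax : gammaRate π = Fintype.card X) {N : ℕ} (hN : 0 < N) {c : ℝ} (hc : 0 < c) (hc1 : c < 1) :
    ∃ v : lp (fun _ : G => ℝ) 2, ‖v‖ = 1 ∧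
      c * (Fintype.card X : ℝ) ^ N ≤ ‖walkSum (fun x => π (FreeSemigroup.of x)) N v‖ := by
  set s : X → G := fun x => π (FreeSemigroup.of x) with hs
  have hd : (0 : ℝ) < Fintype.card X := by exact_mod_cast Fintype.card_pos
  set d : ℝ := (Fintype.card X : ℝ) with hdd
  obtain ⟨n, hn⟩ : ∃ n, c * d ^ N * ‖walkSum s n (deltaOne G)‖ <
      ‖walkSum s (n + N) (deltaOne G)‖ := by
    by_contra! H
    -- Otherwise the norms decay like `(r d)ⁿ`, where `r` is the `N`-th root of `c`.
    set r : ℝ := c ^ (1 / (N : ℝ)) with hr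
    have hr0 : 0 < r := by positivity
    have hr1 : r < 1 := Real.rpow_lt_one hc.le hc1 (by positivity)
    have hrN : r ^ N = c := by
      rw [hr, one_div]
      exact Real.rpow_inv_natCast_pow hc.le hN.ne'
    have key : ∀ n, ‖walkSum s n (deltaOne G)‖ ≤
        (∑ i ∈ Finset.range N, ‖walkSum s i (deltaOne G)‖ / (r * d) ^ i) * (r * d) ^ n := by
      intro n
      induction n using Nat.strong_induction_on with
      | _ n ih =>
        rcases lt_or_ge n N with hnN | hnN
        · rw [← div_le_iff₀ (by positivity)]
          exact Finset.single_le_sum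
            (f := fun i => ‖walkSum s i (deltaOne G)‖ / (r * d) ^ i)
            (fun i _ => by positivity) (Finset.mem_range.2 hnN)
        · obtain ⟨m, rfl⟩ := Nat.exists_eq_add_of_le' hnN
          refine (H m).trans ?_
          refine (mul_le_mul_of_nonneg_left (ih m (by omega)) (by positivity)).trans (le_of_eq ?_)
          generalize (∑ i ∈ Finset.range N, ‖walkSum s i (deltaOne G)‖ / (r * d) ^ i) = K
          rw [← hrN, pow_add (r * d) m N, mul_pow r d N]; ring
    exact (gammaRate_lt π hr0 hr1 key).ne hmax
  set q := walkSum s n (deltaOne G) with hq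
  rw [walkSum_add, ← hq] at hn
  have hlin : ∀ (a : ℝ), walkSum s N (a • q) = a • walkSum s N q := by
    intro a
    simp [walkSum, Finset.smul_sum]
  have hq0 : 0 < ‖q‖ := by
    rw [norm_pos_iff]
    intro h0
    have := hlin 0
    rw [zero_smul, zero_smul] at this
    rw [h0, this] at hn
    simp at hn
  refine ⟨‖q‖⁻¹ • q, ?_, ?_⟩
  · rw [norm_smul, norm_inv, norm_norm, inv_mul_cancel₀ hq0.ne']
  · rw [hlin, norm_smul, norm_inv, norm_norm, inv_mul_eq_div, le_div_iff₀ hq0]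
    exact hn.le

/-! ### Vectors on which words of equal length act alike -/

/-- Quantitative strict convexity of the Hilbert ball: unit vectors whose sum has almost maximal
norm are almost equal. -/
lemma norm_sub_sq_le_of_sum {E ι : Type*} [NormedAddCommGroup E] [InnerProductSpace ℝ E]
    [Fintype ι] (v : ι → E) (hv : ∀ i, ‖v i‖ = 1) {δ : ℝ}
    (h : (Fintype.card ι : ℝ) - δ ≤ ‖∑ i, v i‖) (i j : ι) : ‖v i - v j‖ ^ 2 ≤ 4 * δ := by
  classical
  have hbound : ∀ t : Finset ι, ‖∑ k ∈ t, v k‖ ≤ t.card := fun t =>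
    (norm_sum_le _ _).trans (by simp [hv])
  rcases eq_or_ne i j with rfl | hij
  · have := hbound Finset.univ
    rw [Finset.card_univ] at this
    simp
    linarith
  · have hsum : ∑ k, v k = (v i + v j) + ∑ k ∈ (Finset.univ.erase i).erase j, v k := by
      rw [← Finset.add_sum_erase _ _ (Finset.mem_univ i), ← Finset.add_sum_erase _ _
        (Finset.mem_erase.2 ⟨hij.symm, Finset.mem_univ j⟩), add_assoc]
    have hc : (((Finset.univ.erase i).erase j).card : ℝ) + 2 = Fintype.card ι := by
      have h1 := Finset.card_erase_add_one (Finset.mem_univ i)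
      have h2 := Finset.card_erase_add_one
        (Finset.mem_erase.2 ⟨hij.symm, Finset.mem_univ j⟩ : j ∈ Finset.univ.erase i)
      rw [Finset.card_univ] at h1
      exact_mod_cast (by omega : ((Finset.univ.erase i).erase j).card + 2 = Fintype.card ι)
    have h1 := norm_add_le (v i + v j) (∑ k ∈ (Finset.univ.erase i).erase j, v k)
    rw [← hsum] at h1
    have h2 := hbound ((Finset.univ.erase i).erase j)
    have h3 := parallelogram_law_with_norm ℝ (v i) (v j)
    have h4 := norm_add_le (v i) (v j)
    rw [hv, hv] at h3 h4
    nlinarith [norm_nonneg (v i + v j)]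

/-- Maximal cogrowth gives unit vectors on which any two words of equal length `m ≤ N` act almost
identically. -/
lemma exists_almost_equal [Nonempty X] (π : FreeSemigroup X →ₙ* G)
    (hmax : gammaRate π = Fintype.card X) (N : ℕ) {ε : ℝ} (hε : 0 < ε) :
    ∃ v : lp (fun _ : G => ℝ) 2, ‖v‖ = 1 ∧ ∀ (a b : List X), a.length = b.length → a.length ≤ N →
      ‖leftTrans (a.map fun x => π (FreeSemigroup.of x)).prod v -
        leftTrans (b.map fun x => π (FreeSemigroup.of x)).prod v‖ ≤ ε := by
  set s : X → G := fun x => π (FreeSemigroup.of x) with hs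
  have hd : (0 : ℝ) < Fintype.card X := by exact_mod_cast Fintype.card_pos
  have hd' : (0 : ℝ) < (Fintype.card X : ℝ) ^ (N + 1) := by positivity
  set D : ℝ := (Fintype.card X : ℝ) ^ (N + 1) with hD
  -- `4 η D ≤ ε²` is the defect allowed by `norm_sub_sq_le_of_sum` for a sum of `D` unit vectors.
  set η : ℝ := min (1 / 2) (ε ^ 2 / (4 * D)) with hη
  have hη0 : 0 < η := by positivity
  have hη1 : η ≤ 1 / 2 := min_le_left _ _
  have hη2 : 4 * (η * D) ≤ ε ^ 2 := by
    have := min_le_right (1 / 2) (ε ^ 2 / (4 * D))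
    rw [← hη, le_div_iff₀ (by positivity)] at this
    linarith
  obtain ⟨v, hv, hgrow⟩ := exists_growth π hmax (N := N + 1) (c := 1 - η) (by omega)
    (by linarith) (by linarith)
  refine ⟨v, hv, ?_⟩
  have hfull : ∀ a b : List X, a.length = N + 1 → b.length = N + 1 →
      ‖leftTrans (a.map s).prod v - leftTrans (b.map s).prod v‖ ≤ ε := by
    have hw : ∀ a : List X, a.length = N + 1 →
        ∃ u : Fin (N + 1) → X, wordProd s u = (a.map s).prod := by
      intro a ha
      rw [← ha]
      refine ⟨a.get, ?_⟩
      have h2 : (List.ofFn a.get).map s = List.ofFn (s ∘ a.get) := List.map_ofFn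
      rw [List.ofFn_get] at h2
      rw [h2]
      rfl
    intro a b ha hb
    obtain ⟨u, hu⟩ := hw a ha
    obtain ⟨w, hw⟩ := hw b hb
    rw [← hu, ← hw]
    have := norm_sub_sq_le_of_sum (fun u : Fin (N + 1) → X => leftTrans (wordProd s u) v)
      (fun u => by rw [LinearIsometry.norm_map, hv]) (δ := η * D) (by
        refine le_trans (le_of_eq ?_) hgrow
        simp only [Fintype.card_fun, Fintype.card_fin, Nat.cast_pow, hD]
        ring) u w
    exact le_of_sq_le_sq (this.trans hη2) hε.le
  intro a b hab haN
  -- Pad both words on the left by the same letter; this acts isometrically on the difference.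
  obtain ⟨x⟩ := ‹Nonempty X›
  have := hfull (List.replicate (N + 1 - a.length) x ++ a) (List.replicate (N + 1 - a.length) x ++ b)
    (by simp; omega) (by simp; omega)
  rwa [List.map_append, List.map_append, List.prod_append, List.prod_append, leftTrans_mul,
    leftTrans_mul, ← map_sub, LinearIsometry.norm_map] at this

end Walk

/-! ### Almost invariant means -/

/-- The averages of the squared densities of the translates of an almost equalized vector along
the powers of a fixed letter are almost invariant means. -/
lemma exists_approx_mean {X : Type} [Fintype X] {G : Type*} [Group G] [Nonempty X]
    (π : FreeSemigroup X →ₙ* G)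
    (hmax : gammaRate π = Fintype.card X) (k : ℕ) :
    ∃ μ : Set G → ℝ, (∀ A : Set G, 0 ≤ μ A ∧ μ A ≤ 1) ∧ μ Set.univ = 1 ∧
      (∀ A B : Set G, Disjoint A B → μ (A ∪ B) = μ A + μ B) ∧
      ∀ (x : X) (T : Set G),
        |μ ((fun t => π (FreeSemigroup.of x) * t) '' T) - μ T| ≤ 1 / ((k : ℝ) + 1) := by
  obtain ⟨x₀⟩ := id ‹Nonempty X›
  set s : X → G := fun x => π (FreeSemigroup.of x) with hs
  -- The error is at most `1 / N` from the ends of the telescoping sum and `1 / N` from replacing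
  -- `x x₀ᵐ` by `x₀^{m+1}`.
  set N : ℕ := 2 * (k + 1) with hN
  have hN0 : (0 : ℝ) < N := by rw [hN]; positivity
  have hε : (0 : ℝ) < 1 / (2 * N) := by positivity
  obtain ⟨v, hv, hclose⟩ := exists_almost_equal π hmax N hε
  set f : ℕ → lp (fun _ : G => ℝ) 2 := fun m => leftTrans (s x₀ ^ m) v with hf
  have hfn : ∀ m, ‖f m‖ = 1 := fun m => by rw [hf]; simp [hv]
  have hle1 : ∀ m T, sqMass (f m) T ≤ 1 := fun m T => by
    have := sqMass_le (f m) T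
    rwa [hfn, one_pow] at this
  refine ⟨fun T => (∑ m ∈ Finset.range N, sqMass (f m) T) / N, ?_, ?_, ?_, ?_⟩
  · intro A
    refine ⟨div_nonneg (Finset.sum_nonneg fun m _ => sqMass_nonneg _ _) hN0.le, ?_⟩
    rw [div_le_one hN0]
    refine (Finset.sum_le_sum fun m _ => hle1 m A).trans ?_
    simp
  · simp [sqMass_univ, hfn, hN0.ne']
  · intro A B hAB
    simp only [sqMass_union _ hAB, Finset.sum_add_distrib, add_div]
  · intro x T
    set T' : Set G := (fun t => s x * t) '' T with hT'
    have hstep : ∀ m ∈ Finset.range N, |sqMass (f (m + 1)) T' - sqMass (f m) T| ≤ 1 / N := by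
      intro m hm
      have hm' := Finset.mem_range.1 hm
      rw [← sqMass_leftTrans (s x) (f m) T]
      have h1 := hclose (x₀ :: List.replicate m x₀) (x :: List.replicate m x₀) (by simp)
        (by simp; omega)
      simp only [List.map_cons, List.prod_cons, List.map_replicate, List.prod_replicate,
        leftTrans_mul (π (FreeSemigroup.of x))] at h1
      rw [← pow_succ'] at h1
      change ‖f (m + 1) - leftTrans (s x) (f m)‖ ≤ _ at h1
      have hn : ‖leftTrans (s x) (f m)‖ = 1 := by rw [LinearIsometry.norm_map, hfn]
      have h2 := sqMass_sub_le _ _ (hfn (m + 1)) hn T'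
      have h3 := sqMass_sub_le _ _ hn (hfn (m + 1)) T'
      rw [norm_sub_rev] at h3
      have h4 : (1 : ℝ) / N = 2 * (1 / (2 * N)) := by field_simp
      rw [abs_le, h4]
      constructor <;> linarith
    have htel : ∑ m ∈ Finset.range N, sqMass (f m) T' - ∑ m ∈ Finset.range N, sqMass (f m) T =
        ∑ m ∈ Finset.range N, (sqMass (f (m + 1)) T' - sqMass (f m) T) +
          (sqMass (f 0) T' - sqMass (f N) T') := by
      have := Finset.sum_range_sub (fun m => sqMass (f m) T') N
      simp only [Finset.sum_sub_distrib] at this ⊢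
      linarith
    have h1 : |∑ m ∈ Finset.range N, (sqMass (f (m + 1)) T' - sqMass (f m) T)| ≤ 1 := by
      refine (Finset.abs_sum_le_sum_abs _ _).trans ((Finset.sum_le_sum hstep).trans ?_)
      simp [hN0.ne']
    have h2 : |sqMass (f 0) T' - sqMass (f N) T'| ≤ 1 := by
      have a1 := hle1 0 T'
      have a2 := hle1 N T'
      have a3 := sqMass_nonneg (f 0) T'
      have a4 := sqMass_nonneg (f N) T'
      rw [abs_le]
      constructor <;> linarith
    rw [← sub_div, abs_div, abs_of_pos hN0, htel, div_le_iff₀ hN0]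
    refine (abs_add_le _ _).trans ((add_le_add h1 h2).trans (le_of_eq ?_))
    rw [hN]
    push_cast
    field_simp
    norm_num

theorem stmt11 {X : Type} {G : Type*} [Group G] [Fintype X] [Nonempty X]
    (π : FreeSemigroup X →ₙ* G) (hπ : Function.Surjective π)
    (hmax : gammaRate π = Fintype.card X) :
    IsAmenableGroup G :=
  isAmenableGroup_of_approx π hπ (exists_approx_mean π hmax)
end

section
/- Let S be a semigroup with a finite choice of generators X via π : X⁺ → S. If S has an element of maximal local cogrowth (i.e. some s ∈ S with λ_s = |X|), then the set I = {s ∈ S : λ_s = |X|} of all such elements is a minimal ideal of S: I is an ideal and no ideal of S is properly contained in I. -/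
/-!
A word of length `n` over `X` that avoids a fixed factor `v` splits into blocks of length `|v|`, none
of which equals `v`; since this leaves `|X| ^ |v| - 1` choices per block, the number of such words is
`O(ρ ^ n)` for some `ρ < |X|` (`exists_avoid_bound`). Hence if `s` has maximal local cogrowth, then
for every `t = π v` some word representing `s` contains `v`, so `s` lies in every ideal containing
`t`. Thus the elements of maximal local cogrowth lie in every ideal of `S`, which gives minimality.

They form an ideal because prepending or appending a fixed word of length `m` injects the words of
length `n` representing `s` into the words of length `n + m` representing the product, and a shift
by `m` does not affect the exponential growth rate. Both parts use the criterion `rate_eq_card_iff`,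
which replaces the limsup by a condition on frequent lower bounds.
-/

open Filter

/-- The local cogrowth function at `s`. -/
noncomputable def lambdaFn {X : Type} {S : Type*} [Mul S]
    (π : FreeSemigroup X →ₙ* S) (s : S) (n : ℕ) : ℕ :=
  Nat.card {w : FreeSemigroup X // w.length = n ∧ π w = s}

/-- The local cogrowth rate at `s`. -/
noncomputable def lambdaRate {X : Type} {S : Type*} [Mul S]
    (π : FreeSemigroup X →ₙ* S) (s : S) : ℝ :=
  Filter.atTop.limsup (fun n : ℕ => (lambdaFn π s n : ℝ) ^ (1 / (n : ℝ)))

/-- An ideal of a semigroup. -/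
def IsIdeal {S : Type*} [Semigroup S] (I : Set S) : Prop :=
  I.Nonempty ∧ ∀ a ∈ I, ∀ x : S, x * a ∈ I ∧ a * x ∈ I

/-! ### Words and ideals -/

/-- The word underlying an element of the free semigroup, as a (nonempty) list. -/
def wordList {X : Type} (w : FreeSemigroup X) : List X := w.head :: w.tail

lemma wordList_injective {X : Type} : Function.Injective (wordList (X := X)) := by
  rintro ⟨a, l⟩ ⟨b, l'⟩ h
  simpa [wordList] using h

lemma length_wordList {X : Type} (w : FreeSemigroup X) : (wordList w).length = w.length := by
  simp [wordList, FreeSemigroup.length]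

lemma wordList_mul {X : Type} (u w : FreeSemigroup X) :
    wordList (u * w) = wordList u ++ wordList w := by
  simp [wordList]

lemma exists_wordList_eq {X : Type} {l : List X} (h : l ≠ []) : ∃ w, wordList w = l := by
  cases l with
  | nil => exact absurd rfl h
  | cons a t => exact ⟨⟨a, t⟩, rfl⟩

/-- A word containing `v` as a factor is mapped into every ideal containing `π v`. -/
lemma mem_ideal_of_infix {X : Type} {S : Type*} [Semigroup S] (π : FreeSemigroup X →ₙ* S)
    {J : Set S} (hJ : IsIdeal J) {v w : FreeSemigroup X} (hv : π v ∈ J)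
    (h : wordList v <:+: wordList w) : π w ∈ J := by
  obtain ⟨a, b, hab⟩ := h
  have key : ∃ u, wordList u = a ++ wordList v ∧ π u ∈ J := by
    by_cases ha : a = []
    · exact ⟨v, by simp [ha], hv⟩
    · obtain ⟨a', rfl⟩ := exists_wordList_eq ha
      exact ⟨a' * v, wordList_mul _ _, by rw [map_mul]; exact (hJ.2 _ hv _).1⟩
  obtain ⟨u, hu, huJ⟩ := key
  rw [← hu] at hab
  by_cases hb : b = []
  · have : u = w := wordList_injective (by simpa [hb] using hab)
    exact this ▸ huJ
  · obtain ⟨b', rfl⟩ := exists_wordList_eq hb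
    rw [← wordList_mul] at hab
    rw [← wordList_injective hab, map_mul]
    exact (hJ.2 _ huJ _).2

/-! ### Counting words that avoid a factor -/

instance finite_words {X : Type} [Finite X] (n : ℕ) (p : List X → Prop) :
    Finite {l : List X // l.length = n ∧ p l} := by
  cases nonempty_fintype X
  have : Finite (List.Vector X n) := inferInstance
  exact Finite.of_injective (β := List.Vector X n) (fun l => ⟨l.1, l.2.1⟩)
    fun a b h => Subtype.ext (Subtype.mk.inj h)

/-- The number of words of length `n` without the factor `v`. -/
noncomputable def avoidCount {X : Type} (v : List X) (n : ℕ) : ℕ :=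
  Nat.card {l : List X // l.length = n ∧ ¬ v <:+: l}

lemma card_words_le {X : Type} [Fintype X] (n : ℕ) (p : List X → Prop) :
    Nat.card {l : List X // l.length = n ∧ p l} ≤ Fintype.card X ^ n := by
  rw [← card_vector (α := X) n, ← Nat.card_eq_fintype_card]
  exact Nat.card_le_card_of_injective (β := List.Vector X n) (fun l => ⟨l.1, l.2.1⟩)
    fun a b h => Subtype.ext (Subtype.mk.inj h)

/-- Words avoiding `v` start with a block of length `|v|` different from `v`, and what follows that
block again avoids `v`. -/
lemma avoidCount_add {X : Type} [Fintype X] (v : List X) (n : ℕ) :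
    avoidCount v (n + v.length) ≤ (Fintype.card X ^ v.length - 1) * avoidCount v n := by
  classical
  have hc : Nat.card {l : List.Vector X v.length // l ≠ ⟨v, rfl⟩}
      = Fintype.card X ^ v.length - 1 := by
    rw [Nat.card_eq_fintype_card, ← card_vector (α := X) v.length]
    exact @Set.card_ne_eq (List.Vector X v.length) _ ⟨v, rfl⟩ _
  rw [← hc, avoidCount, avoidCount, ← Nat.card_prod]
  refine Nat.card_le_card_of_injective (fun l =>
    (⟨⟨l.1.take v.length, by simp [l.2.1]⟩, fun h => l.2.2 ?_⟩,
      ⟨l.1.drop v.length, by simp [l.2.1], fun h => l.2.2 ?_⟩)) ?_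
  · have h' : l.1.take v.length = v := congrArg Subtype.val h
    have hp := (List.take_prefix v.length l.1).isInfix
    rwa [h'] at hp
  · exact h.trans (List.drop_suffix _ _).isInfix
  · rintro ⟨a, ha⟩ ⟨b, hb⟩ h
    simp only [Prod.mk.injEq, Subtype.mk.injEq] at h
    apply Subtype.ext
    have h1 : a.take v.length = b.take v.length :=
      congrArg Subtype.val (congrArg Subtype.val h.1)
    change a = b
    rw [← List.take_append_drop v.length a, ← List.take_append_drop v.length b, h1, h.2]

/-- Avoiding a nonempty factor lowers the exponential growth rate strictly below `|X|`. -/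
lemma exists_avoid_bound {X : Type} [Fintype X] [Nonempty X] (v : List X) (hv : v ≠ []) :
    ∃ ρ C : ℝ, 0 < ρ ∧ ρ < Fintype.card X ∧ 0 < C ∧ ∀ n, (avoidCount v n : ℝ) ≤ C * ρ ^ n := by
  set k : ℝ := (Fintype.card X : ℝ) with hk
  have hk1 : 1 ≤ k := by
    rw [hk]; exact_mod_cast Fintype.card_pos (α := X)
  have hm : v.length ≠ 0 := by simpa using hv
  have hkm : 1 ≤ k ^ v.length := one_le_pow₀ hk1
  -- Subtracting `1/2` instead of `1` keeps `ρ` positive when `X` has a single letter.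
  obtain ⟨ρ, hρ0, hρm⟩ : ∃ ρ : ℝ, 0 ≤ ρ ∧ ρ ^ v.length = k ^ v.length - 1 / 2 :=
    ⟨(k ^ v.length - 1 / 2) ^ ((v.length : ℝ)⁻¹), by apply Real.rpow_nonneg; linarith,
      Real.rpow_inv_natCast_pow (by linarith) hm⟩
  have hρ : 0 < ρ := by
    rcases hρ0.eq_or_lt with h | h
    · rw [← h, zero_pow hm] at hρm; linarith
    · exact h
  have hρk : ρ < k := lt_of_pow_lt_pow_left₀ v.length (by linarith) (by linarith)
  refine ⟨ρ, (k / ρ) ^ v.length, hρ, hρk, by positivity, fun n => ?_⟩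
  induction n using Nat.strong_induction_on with
  | _ n ih =>
    rcases lt_or_ge n v.length with h | h
    · calc (avoidCount v n : ℝ) ≤ k ^ n := by
            rw [hk]; exact_mod_cast card_words_le n _
        _ = (k / ρ) ^ n * ρ ^ n := by rw [← mul_pow, div_mul_cancel₀ _ hρ.ne']
        _ ≤ (k / ρ) ^ v.length * ρ ^ n := by
            gcongr
            exact (one_le_div hρ).2 hρk.le
    · obtain ⟨j, rfl⟩ := Nat.exists_eq_add_of_le' h
      have h1 : (avoidCount v (j + v.length) : ℝ) ≤ (k ^ v.length - 1) * avoidCount v j := by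
        have h2 : ((avoidCount v (j + v.length) : ℕ) : ℝ) ≤
            (((Fintype.card X ^ v.length - 1) * avoidCount v j : ℕ) : ℝ) := by
          exact_mod_cast avoidCount_add v j
        rwa [Nat.cast_mul, Nat.cast_sub (Nat.one_le_pow _ _ Fintype.card_pos), Nat.cast_pow,
          Nat.cast_one] at h2
      calc (avoidCount v (j + v.length) : ℝ) ≤ (k ^ v.length - 1) * avoidCount v j := h1
        _ ≤ ρ ^ v.length * ((k / ρ) ^ v.length * ρ ^ j) := by
            gcongr
            · linarith
            · exact ih j (by omega)
        _ = _ := by ring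

/-! ### Maximal local cogrowth as a frequent lower bound -/

lemma lambdaFn_le_card_words {X : Type} [Finite X] {S : Type*} [Semigroup S]
    (π : FreeSemigroup X →ₙ* S) (s : S) (n : ℕ) (p : List X → Prop)
    (hp : ∀ w, π w = s → p (wordList w)) :
    lambdaFn π s n ≤ Nat.card {l : List X // l.length = n ∧ p l} :=
  Nat.card_le_card_of_injective
    (fun w => ⟨wordList w.1, by rw [length_wordList, w.2.1], hp _ w.2.2⟩)
    fun a b h => Subtype.ext (wordList_injective (Subtype.mk.inj h))

lemma lambdaFn_le {X : Type} [Fintype X] {S : Type*} [Semigroup S]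
    (π : FreeSemigroup X →ₙ* S) (s : S) (n : ℕ) : lambdaFn π s n ≤ Fintype.card X ^ n :=
  (lambdaFn_le_card_words π s n (fun _ => True) fun _ _ => trivial).trans (card_words_le n _)

/-- The rate is at most `|X|`, so it equals `|X|` exactly when every smaller exponential is
frequently a lower bound for the local cogrowth function. -/
lemma rate_eq_card_iff {X : Type} [Fintype X] [Nonempty X] {S : Type*} [Semigroup S]
    (π : FreeSemigroup X →ₙ* S) (s : S) :
    lambdaRate π s = Fintype.card X ↔
      ∀ ρ : ℝ, 0 < ρ → ρ < Fintype.card X → ∃ᶠ n in atTop, ρ ^ n ≤ (lambdaFn π s n : ℝ) := by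
  have hub : ∀ᶠ n : ℕ in atTop, (lambdaFn π s n : ℝ) ^ (1 / (n : ℝ)) ≤ Fintype.card X := by
    filter_upwards [eventually_ne_atTop 0] with n hn
    have h : (lambdaFn π s n : ℝ) ≤ (Fintype.card X : ℝ) ^ n := by
      exact_mod_cast lambdaFn_le π s n
    calc (lambdaFn π s n : ℝ) ^ (1 / (n : ℝ)) ≤ ((Fintype.card X : ℝ) ^ n) ^ (1 / (n : ℝ)) := by
          gcongr
      _ = Fintype.card X := by rw [one_div, Real.pow_rpow_inv_natCast (by positivity) hn]
  have hbdd : IsBoundedUnder (· ≤ ·) atTop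
      (fun n : ℕ => (lambdaFn π s n : ℝ) ^ (1 / (n : ℝ))) := ⟨_, eventually_map.2 hub⟩
  have hcob : IsCoboundedUnder (· ≤ ·) atTop
      (fun n : ℕ => (lambdaFn π s n : ℝ) ^ (1 / (n : ℝ))) :=
    IsCoboundedUnder.of_frequently_ge (a := 0)
      (Eventually.frequently (Eventually.of_forall fun n => by positivity))
  have hpow : ∀ (n : ℕ) (ρ : ℝ), n ≠ 0 → 0 < ρ →
      (ρ ≤ (lambdaFn π s n : ℝ) ^ (1 / (n : ℝ)) ↔ ρ ^ n ≤ (lambdaFn π s n : ℝ)) := by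
    intro n ρ hn hρ
    rw [one_div, Real.le_rpow_inv_iff_of_pos hρ.le (by positivity) (by positivity),
      Real.rpow_natCast]
  constructor
  · intro h ρ hρ hρk
    have hf := frequently_lt_of_lt_limsup hcob (h.symm ▸ hρk : ρ < lambdaRate π s)
    exact (hf.and_eventually (eventually_ne_atTop 0)).mono
      fun n hn => (hpow n ρ hn.2 hρ).1 hn.1.le
  · intro h
    refine le_antisymm (limsup_le_of_le hcob hub) (le_of_forall_lt fun ρ hρ => ?_)
    have hk : (0 : ℝ) < Fintype.card X := by exact_mod_cast Fintype.card_pos (α := X)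
    obtain ⟨σ, hσ, hσk⟩ := exists_between (max_lt hρ hk)
    have hσ0 : 0 < σ := (le_max_right _ _).trans_lt hσ
    refine ((le_max_left _ _).trans_lt hσ).trans_le (le_limsup_of_frequently_le ?_ hbdd)
    exact ((h σ hσ0 hσk).and_eventually (eventually_ne_atTop 0)).mono
      fun n hn => (hpow n σ hn.2 hσ0).2 hn.1

/-- An exponential with larger base eventually dominates. -/
lemma eventually_mul_pow_lt {a b : ℝ} (C : ℝ) (ha : 0 < a) (hab : a < b) :
    ∀ᶠ n : ℕ in atTop, C * a ^ n < b ^ n := by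
  have h := tendsto_pow_atTop_atTop_of_one_lt ((one_lt_div ha).2 hab)
  filter_upwards [h.eventually_gt_atTop C] with n hn
  rwa [div_pow, lt_div_iff₀ (by positivity)] at hn

/-- Maximality passes to any element whose cogrowth function dominates a shift. -/
lemma rate_eq_card_of_shift {X : Type} [Fintype X] [Nonempty X] {S : Type*} [Semigroup S]
    (π : FreeSemigroup X →ₙ* S) {s t : S} (m : ℕ)
    (hst : ∀ n, lambdaFn π s n ≤ lambdaFn π t (n + m))
    (hs : lambdaRate π s = Fintype.card X) : lambdaRate π t = Fintype.card X := by
  rw [rate_eq_card_iff] at hs ⊢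
  intro ρ hρ hρk
  obtain ⟨σ, hσ, hσk⟩ := exists_between hρk
  have hf := (hs σ (hρ.trans hσ) hσk).and_eventually (eventually_mul_pow_lt (ρ ^ m) hρ hσ)
  rw [frequently_atTop] at hf ⊢
  intro a
  obtain ⟨n, hn, h1, h2⟩ := hf a
  refine ⟨n + m, by omega, ?_⟩
  have h3 : (lambdaFn π s n : ℝ) ≤ lambdaFn π t (n + m) := by exact_mod_cast hst n
  rw [pow_add, mul_comm]
  linarith

/-! ### Closure under products and minimality -/

lemma finite_lambda {X : Type} [Finite X] {S : Type*} [Semigroup S]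
    (π : FreeSemigroup X →ₙ* S) (s : S) (n : ℕ) :
    Finite {w : FreeSemigroup X // w.length = n ∧ π w = s} :=
  Finite.of_injective
    (fun w => (⟨wordList w.1, by rw [length_wordList, w.2.1], trivial⟩ :
      {l : List X // l.length = n ∧ True}))
    fun a b h => Subtype.ext (wordList_injective (Subtype.mk.inj h))

lemma lambdaFn_le_mul_left {X : Type} [Finite X] {S : Type*} [Semigroup S]
    (π : FreeSemigroup X →ₙ* S) (s : S) (u : FreeSemigroup X) (n : ℕ) :
    lambdaFn π s n ≤ lambdaFn π (π u * s) (n + u.length) := by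
  have := finite_lambda π (π u * s) (n + u.length)
  refine Nat.card_le_card_of_injective (fun w => ⟨u * w.1, ?_, ?_⟩) fun a b h => ?_
  · rw [FreeSemigroup.length_mul, w.2.1, add_comm]
  · rw [map_mul, w.2.2]
  · have h' := congrArg wordList (Subtype.mk.inj h)
    simp only [wordList_mul] at h'
    exact Subtype.ext (wordList_injective (List.append_cancel_left h'))

lemma lambdaFn_le_mul_right {X : Type} [Finite X] {S : Type*} [Semigroup S]
    (π : FreeSemigroup X →ₙ* S) (s : S) (u : FreeSemigroup X) (n : ℕ) :
    lambdaFn π s n ≤ lambdaFn π (s * π u) (n + u.length) := by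
  have := finite_lambda π (s * π u) (n + u.length)
  refine Nat.card_le_card_of_injective (fun w => ⟨w.1 * u, ?_, ?_⟩) fun a b h => ?_
  · rw [FreeSemigroup.length_mul, w.2.1]
  · rw [map_mul, w.2.2]
  · have h' := congrArg wordList (Subtype.mk.inj h)
    simp only [wordList_mul] at h'
    exact Subtype.ext (wordList_injective (List.append_cancel_right h'))

/-- Every word occurs as a factor of some word representing an element of maximal cogrowth. -/
lemma exists_infix_of_rate_eq {X : Type} [Fintype X] [Nonempty X] {S : Type*} [Semigroup S]
    (π : FreeSemigroup X →ₙ* S) {s : S} (hs : lambdaRate π s = Fintype.card X)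
    (v : FreeSemigroup X) : ∃ w, π w = s ∧ wordList v <:+: wordList w := by
  by_contra! hno
  obtain ⟨ρ, C, hρ, hρk, -, hC⟩ := exists_avoid_bound (wordList v) (List.cons_ne_nil _ _)
  obtain ⟨σ, hσ, hσk⟩ := exists_between hρk
  obtain ⟨n, h1, h2⟩ := (((rate_eq_card_iff π s).1 hs σ (hρ.trans hσ) hσk).and_eventually
    (eventually_mul_pow_lt C hρ hσ)).exists
  have h3 : (lambdaFn π s n : ℝ) ≤ avoidCount (wordList v) n := by
    exact_mod_cast lambdaFn_le_card_words π s n (fun l => ¬ wordList v <:+: l) hno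
  linarith [hC n]

theorem stmt13 {X : Type} {S : Type*} [Semigroup S] [Fintype X] [Nonempty X]
    (π : FreeSemigroup X →ₙ* S) (hπ : Function.Surjective π)
    (hmax : ∃ s : S, lambdaRate π s = Fintype.card X) :
    IsIdeal {s : S | lambdaRate π s = Fintype.card X} ∧
      ∀ J : Set S, IsIdeal J → J ⊆ {s : S | lambdaRate π s = Fintype.card X} →
        J = {s : S | lambdaRate π s = Fintype.card X} := by
  refine ⟨⟨hmax, fun a ha x => ?_⟩, fun J hJ hsub => hsub.antisymm fun s hs => ?_⟩
  · obtain ⟨u, rfl⟩ := hπ x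
    exact ⟨rate_eq_card_of_shift π u.length (lambdaFn_le_mul_left π a u) ha,
      rate_eq_card_of_shift π u.length (lambdaFn_le_mul_right π a u) ha⟩
  · obtain ⟨t, ht⟩ := hJ.1
    obtain ⟨v, rfl⟩ := hπ t
    obtain ⟨w, rfl, hw⟩ := exists_infix_of_rate_eq π hs v
    exact mem_ideal_of_infix π hJ ht hw
end
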